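/- Let P be a dcpo. The complete lattice Γ₀(P) of all Scott closed subsets of P (including the empty set), ordered by inclusion, is order isomorphic to the family Γ_F(P^∨) of all F-Scott closed subsets of the poset P^∨, ordered by inclusion; an order isomorphism is given by η(A) = cl_F(j(A)), the F-Scott closure in P^∨ of {↓a : a ∈ A}. -/

import Mathlib

/-!
The isomorphism is `A ↦ {B ∈ P^∨ | B ⊆ A}`, with inverse `𝒜 ↦ j⁻¹(𝒜)`.

Least upper bounds in `P^∨` of nonempty families which are directed, or finite and consistent,
exist and are Scott closures of unions (`Pvee.exists_isLUB`), because a Scott continuous map has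
the same upper bounds on a set as on its Scott closure. Hence `{B | B ⊆ A}` is F-Scott closed.

The crux is `mem_of_jmap_mem`: if `𝒜` is F-Scott closed, `B ∈ P^∨` and `j(B) ⊆ 𝒜`, then `B ∈ 𝒜`.
It is proved by testing the ⋁-existence of `B` on the dcpo-∨↑-semilattice `Doubling 𝒜` obtained by
gluing two copies of `P^∨` along `𝒜`. The map `j`, followed by the inclusion of one of the copies,
is Scott continuous. If `B ∉ 𝒜`, then `j(B)`, which lies in the common part, is bounded by both
copies of `B`, so its supremum lies below both, hence in `𝒜`. This supremum contains `B`,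
and `𝒜` is a lower set: a contradiction.

The two maps are therefore mutually inverse, and the same crux shows that `{B | B ⊆ A}` is the least
F-Scott closed set containing `j(A)`.
-/

universe u v

/-- A *dcpo*: a partial order in which every nonempty directed subset has a least upper bound. -/
def IsDcpo (P : Type*) [PartialOrder P] : Prop :=
  ∀ d : Set P, d.Nonempty → DirectedOn (· ≤ ·) d → ∃ a, IsLUB d a

/-- A *dcpo-∨↑-semilattice*: a dcpo in which every consistent pair of elements
(i.e. pair with an upper bound) has a least upper bound. -/
def IsDcpoVSemilattice (L : Type*) [PartialOrder L] : Prop :=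
  IsDcpo L ∧ ∀ x y : L, BddAbove ({x, y} : Set L) → ∃ a, IsLUB ({x, y} : Set L) a

/-- Scott continuity: `f` maps least upper bounds of nonempty directed sets to
least upper bounds of the images. -/
def IsScottContinuous {P : Type*} {L : Type*} [PartialOrder P] [PartialOrder L]
    (f : P → L) : Prop :=
  ∀ d : Set P, d.Nonempty → DirectedOn (· ≤ ·) d → ∀ a, IsLUB d a → IsLUB (f '' d) (f a)

/-- A *Scott closed* set: a lower set closed under least upper bounds of its
nonempty directed subsets. -/
def IsScottClosed {P : Type*} [PartialOrder P] (A : Set P) : Prop :=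
  IsLowerSet A ∧ ∀ d : Set P, d ⊆ A → d.Nonempty → DirectedOn (· ≤ ·) d →
    ∀ a, IsLUB d a → a ∈ A

/-- The Scott closure of a set: the smallest Scott closed set containing it. -/
def scottClosure {P : Type*} [PartialOrder P] (A : Set P) : Set P :=
  ⋂₀ {C | IsScottClosed C ∧ A ⊆ C}

/-- A subset `A` of a dcpo `P` is *⋁-existing* if for every Scott continuous map `f`
into an arbitrary dcpo-∨↑-semilattice `L`, the supremum of `f '' A` exists in `L`. -/
def SupExisting {P : Type u} [PartialOrder P] (A : Set P) : Prop :=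
  ∀ (L : Type v) [PartialOrder L], IsDcpoVSemilattice L →
    ∀ f : P → L, IsScottContinuous f → ∃ a, IsLUB (f '' A) a

/-- An *F-Scott closed* set: a Scott closed set containing the least upper bound of
each of its nonempty finite consistent subsets. -/
def IsFScottClosed {L : Type*} [PartialOrder L] (A : Set L) : Prop :=
  IsScottClosed A ∧ ∀ F : Set L, F ⊆ A → F.Nonempty → F.Finite → BddAbove F →
    ∀ a, IsLUB F a → a ∈ A

/-- The F-Scott closure of a set: the intersection of all F-Scott closed sets containing it. -/
def fScottClosure {L : Type*} [PartialOrder L] (A : Set L) : Set L :=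
  ⋂₀ {C | IsFScottClosed C ∧ A ⊆ C}

/-- A *dcpo-∨↑-semilattice homomorphism*: maps least upper bounds of nonempty directed
sets and of consistent pairs to the least upper bounds of the images. -/
def IsSemilatticeHom {L : Type*} {M : Type*} [PartialOrder L] [PartialOrder M]
    (f : L → M) : Prop :=
  (∀ d : Set L, d.Nonempty → DirectedOn (· ≤ ·) d → ∀ a, IsLUB d a → IsLUB (f '' d) (f a)) ∧
  (∀ x y : L, BddAbove ({x, y} : Set L) → ∀ a, IsLUB ({x, y} : Set L) a →
    IsLUB (f '' ({x, y} : Set L)) (f a))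

/-- A subset `A` of a dcpo-∨↑-semilattice `L` is *F-⋁-existing* if for every
dcpo-∨↑-semilattice homomorphism `f` into an arbitrary dcpo-∨↑-semilattice `M`,
the supremum of `f '' A` exists in `M`. -/
def FSupExisting {L : Type u} [PartialOrder L] (A : Set L) : Prop :=
  ∀ (M : Type v) [PartialOrder M], IsDcpoVSemilattice M →
    ∀ f : L → M, IsSemilatticeHom f → ∃ a, IsLUB (f '' A) a

/-- `P^∨`: the family of all ⋁-existing Scott closed subsets of `P`, ordered by inclusion. -/
abbrev Pvee (P : Type u) [PartialOrder P] : Type u :=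
  {A : Set P // IsScottClosed A ∧ SupExisting.{u, u} A}

theorem isScottClosed_principal {P : Type u} [PartialOrder P] (x : P) :
    IsScottClosed (Set.Iic x) := by
  constructor
  · intro a b hba ha
    exact le_trans hba ha
  · intro d hd _ _ a ha
    exact ha.2 fun y hy => hd hy

theorem supExisting_principal {P : Type u} [PartialOrder P] (x : P) :
    SupExisting.{u, v} (Set.Iic x) := by
  intro L _ _ f hf
  have hdir : DirectedOn (· ≤ ·) (Set.Iic x) := by
    intro a ha b hb
    exact ⟨x, le_refl x, ha, hb⟩
  exact ⟨f x, hf (Set.Iic x) ⟨x, Set.mem_Iic.2 (le_refl x)⟩ hdir x isLUB_Iic⟩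

/-- The embedding `j` of `P` into `P^∨`, sending `x` to the principal ideal `↓x`. -/
def jmap {P : Type u} [PartialOrder P] (x : P) : Pvee P :=
  ⟨Set.Iic x, isScottClosed_principal x, supExisting_principal.{u, u} x⟩

/-! ### Scott closures and finite suprema -/

theorem IsScottContinuous.mono {P L : Type*} [PartialOrder P] [PartialOrder L] {f : P → L}
    (hf : IsScottContinuous f) : Monotone f := by
  intro x y hxy
  have h := hf (Set.Iic y) ⟨y, le_rfl⟩ (fun a ha b hb => ⟨y, le_rfl, ha, hb⟩) y isLUB_Iic
  exact h.1 ⟨x, hxy, rfl⟩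

theorem isScottClosed_scottClosure {P : Type*} [PartialOrder P] (U : Set P) :
    IsScottClosed (scottClosure U) := by
  constructor
  · intro a b hba ha C hC
    exact hC.1.1 hba (ha C hC)
  · intro d hd hne hdir a ha C hC
    exact hC.1.2 d (fun x hx => hd hx C hC) hne hdir a ha

theorem subset_scottClosure {P : Type*} [PartialOrder P] (U : Set P) : U ⊆ scottClosure U :=
  fun _ hx _ hC => hC.2 hx

theorem scottClosure_subset {P : Type*} [PartialOrder P] {U C : Set P} (hC : IsScottClosed C)
    (h : U ⊆ C) : scottClosure U ⊆ C :=
  fun _ hx => hx C ⟨hC, h⟩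

theorem IsScottContinuous.upperBounds_image_scottClosure {P L : Type*} [PartialOrder P]
    [PartialOrder L] {f : P → L} (hf : IsScottContinuous f) (U : Set P) :
    upperBounds (f '' scottClosure U) = upperBounds (f '' U) := by
  apply Set.Subset.antisymm
  · exact upperBounds_mono_set (Set.image_mono (subset_scottClosure U))
  · rintro u hu _ ⟨x, hx, rfl⟩
    have hC : IsScottClosed {x | f x ≤ u} := by
      constructor
      · intro a b hba ha
        exact (hf.mono hba).trans ha
      · intro d hd hne hdir a ha
        refine (hf d hne hdir a ha).2 ?_
        rintro _ ⟨y, hy, rfl⟩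
        exact hd hy
    exact scottClosure_subset hC (fun y hy => hu ⟨y, hy, rfl⟩) hx

theorem IsDcpoVSemilattice.exists_isLUB_finite {L : Type*} [PartialOrder L]
    (hL : IsDcpoVSemilattice L) {F : Set L} (hF : F.Finite) :
    F.Nonempty → BddAbove F → ∃ a, IsLUB F a := by
  induction F, hF using Set.Finite.induction_on with
  | empty => intro h; exact absurd h Set.not_nonempty_empty
  | @insert a s _ _ ih =>
    rintro - ⟨u, hu⟩
    rcases s.eq_empty_or_nonempty with rfl | hs
    · exact ⟨a, by simp⟩
    · have hus : u ∈ upperBounds s := fun x hx => hu (Set.mem_insert_of_mem _ hx)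
      obtain ⟨m, hm⟩ := ih hs ⟨u, hus⟩
      have hau : a ≤ u := hu (Set.mem_insert _ _)
      obtain ⟨c, hc⟩ := hL.2 a m ⟨u, by
        rintro x (rfl | rfl)
        exacts [hau, hm.2 hus]⟩
      refine ⟨c, ?_, ?_⟩
      · rintro x (rfl | hx)
        · exact hc.1 (by simp)
        · exact (hm.1 hx).trans (hc.1 (by simp))
      · intro v hv
        refine hc.2 ?_
        rintro x (rfl | rfl)
        · exact hv (Set.mem_insert _ _)
        · exact hm.2 fun y hy => hv (Set.mem_insert_of_mem _ hy)

/-! ### Least upper bounds in `P^∨` -/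

/-- Let `S ⊆ P^∨`. If for every Scott continuous `f` into a dcpo-∨↑-semilattice the suprema
`⋁ f(B)`, `B ∈ S`, have a supremum, then the Scott closure of `⋃ S` is ⋁-existing, and it is the
least upper bound of `S` in `P^∨`. The last conjunct records that it lies in every Scott closed set
containing all members of `S`, ⋁-existing or not. -/
theorem Pvee.exists_isLUB {P : Type u} [PartialOrder P] (S : Set (Pvee P))
    (h : ∀ (L : Type u) [PartialOrder L], IsDcpoVSemilattice L →
      ∀ g : Pvee P → L, Monotone g → ∃ m, IsLUB (g '' S) m) :
    ∃ C : Pvee P, IsLUB S C ∧ ∀ A, IsScottClosed A → (∀ B ∈ S, B.1 ⊆ A) → C.1 ⊆ A := by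
  have key : ∀ A, IsScottClosed A → (∀ B ∈ S, B.1 ⊆ A) →
      scottClosure (⋃ B ∈ S, B.1) ⊆ A :=
    fun A hA hS => scottClosure_subset hA (Set.iUnion₂_subset hS)
  refine ⟨⟨scottClosure (⋃ B ∈ S, B.1), isScottClosed_scottClosure _, ?_⟩, ⟨?_, ?_⟩, key⟩
  · intro L _ hL f hf
    choose g hg using fun B : Pvee P => B.2.2 L hL f hf
    have hmono : Monotone g := fun B C hBC =>
      (hg B).2 (upperBounds_mono_set (Set.image_mono hBC) (hg C).1)
    obtain ⟨m, hm⟩ := h L hL g hmono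
    refine ⟨m, ?_⟩
    rw [IsLUB, hf.upperBounds_image_scottClosure]
    constructor
    · rintro _ ⟨x, hx, rfl⟩
      obtain ⟨B, hB, hxB⟩ := Set.mem_iUnion₂.1 hx
      exact ((hg B).1 ⟨x, hxB, rfl⟩).trans (hm.1 ⟨B, hB, rfl⟩)
    · intro u hu
      refine hm.2 ?_
      rintro _ ⟨B, hB, rfl⟩
      refine (hg B).2 ?_
      rintro _ ⟨x, hx, rfl⟩
      exact hu ⟨x, Set.mem_iUnion₂.2 ⟨B, hB, hx⟩, rfl⟩
  · intro B hB x hx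
    exact subset_scottClosure _ (Set.mem_iUnion₂.2 ⟨B, hB, hx⟩)
  · intro C hC
    exact key C.1 C.2.1 fun B hB => hC hB

theorem Pvee.exists_isLUB_directed {P : Type u} [PartialOrder P] (S : Set (Pvee P))
    (hne : S.Nonempty) (hdir : DirectedOn (· ≤ ·) S) :
    ∃ C : Pvee P, IsLUB S C ∧ ∀ A, IsScottClosed A → (∀ B ∈ S, B.1 ⊆ A) → C.1 ⊆ A := by
  refine Pvee.exists_isLUB S fun L _ hL g hg => hL.1 _ (hne.image g) ?_
  rintro _ ⟨B, hB, rfl⟩ _ ⟨C, hC, rfl⟩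
  obtain ⟨D, hD, hBD, hCD⟩ := hdir B hB C hC
  exact ⟨g D, ⟨D, hD, rfl⟩, hg hBD, hg hCD⟩

theorem Pvee.exists_isLUB_finite {P : Type u} [PartialOrder P] (S : Set (Pvee P))
    (hne : S.Nonempty) (hfin : S.Finite) (hb : BddAbove S) :
    ∃ C : Pvee P, IsLUB S C ∧ ∀ A, IsScottClosed A → (∀ B ∈ S, B.1 ⊆ A) → C.1 ⊆ A :=
  Pvee.exists_isLUB S fun _ _ hL _ hg =>
    hL.exists_isLUB_finite (hfin.image _) (hne.image _) (hg.map_bddAbove hb)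

theorem isFScottClosed_setOf_subset {P : Type u} [PartialOrder P] {A : Set P}
    (hA : IsScottClosed A) : IsFScottClosed {B : Pvee P | B.1 ⊆ A} := by
  refine ⟨⟨fun B C hCB hB => Set.Subset.trans hCB hB, ?_⟩, ?_⟩
  · intro d hd hne hdir C hC
    obtain ⟨C', hC', h⟩ := Pvee.exists_isLUB_directed d hne hdir
    rw [hC.unique hC']
    exact h A hA hd
  · intro F hF hne hfin hb C hC
    obtain ⟨C', hC', h⟩ := Pvee.exists_isLUB_finite F hne hfin hb
    rw [hC.unique hC']
    exact h A hA hF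

/-! ### The embedding `j` -/

theorem jmap_le_iff {P : Type u} [PartialOrder P] {x : P} {B : Pvee P} :
    jmap x ≤ B ↔ x ∈ B.1 :=
  ⟨fun h => h (le_refl x), fun h _ hy => B.2.1.1 hy h⟩

theorem jmap_mono {P : Type u} [PartialOrder P] : Monotone (jmap : P → Pvee P) :=
  fun _ _ h => jmap_le_iff.2 h

theorem isScottContinuous_jmap {P : Type u} [PartialOrder P] :
    IsScottContinuous (jmap : P → Pvee P) := by
  intro d hne hdir a ha
  constructor
  · rintro _ ⟨x, hx, rfl⟩
    exact jmap_mono (ha.1 hx)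
  · intro C hC
    exact jmap_le_iff.2 (C.2.1.2 d (fun x hx => jmap_le_iff.1 (hC ⟨x, hx, rfl⟩)) hne hdir a ha)

theorem directedOn_jmap_image {P : Type u} [PartialOrder P] {d : Set P}
    (hdir : DirectedOn (· ≤ ·) d) : DirectedOn (· ≤ ·) (jmap '' d) := by
  rintro _ ⟨x, hx, rfl⟩ _ ⟨y, hy, rfl⟩
  obtain ⟨z, hz, hxz, hyz⟩ := hdir x hx y hy
  exact ⟨_, ⟨z, hz, rfl⟩, jmap_mono hxz, jmap_mono hyz⟩

theorem isScottClosed_jmap_preimage {P : Type u} [PartialOrder P] {𝒜 : Set (Pvee P)}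
    (h𝒜 : IsFScottClosed 𝒜) : IsScottClosed (jmap ⁻¹' 𝒜) := by
  refine ⟨fun a b hba ha => h𝒜.1.1 (jmap_mono hba) ha, fun d hd hne hdir a ha => ?_⟩
  exact h𝒜.1.2 (jmap '' d) (Set.image_subset_iff.2 hd) (hne.image _)
    (directedOn_jmap_image hdir) _ (isScottContinuous_jmap d hne hdir a ha)

/-! ### Two copies of `P^∨` glued along an F-Scott closed family -/

/-- Two copies of `P^∨` glued along `𝒜`. A point is an element of `P^∨` with a label, which is `∅`
on `𝒜` and `{true}` or `{false}`, naming the copy, off `𝒜`. The order is the product order,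
so labelled points are comparable only within the same copy. -/
abbrev Doubling {P : Type u} [PartialOrder P] (𝒜 : Set (Pvee P)) : Type u :=
  {p : Pvee P × Set Bool // (p.1 ∈ 𝒜 → p.2 = ∅) ∧ (p.1 ∉ 𝒜 → ∃ b, p.2 = {b})}

namespace Doubling

variable {P : Type u} [PartialOrder P] {𝒜 : Set (Pvee P)}

open Classical in
/-- The inclusion of the copy `b` of `P^∨`. -/
noncomputable def mk (𝒜 : Set (Pvee P)) (b : Bool) (s : Pvee P) : Doubling 𝒜 :=
  ⟨(s, if s ∈ 𝒜 then ∅ else {b}), fun h => if_pos h, fun h => ⟨b, if_neg h⟩⟩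

theorem mk_snd_of_mem {b : Bool} {s : Pvee P} (h : s ∈ 𝒜) : (mk 𝒜 b s).1.2 = ∅ := if_pos h

theorem mk_snd_of_notMem {b : Bool} {s : Pvee P} (h : s ∉ 𝒜) : (mk 𝒜 b s).1.2 = {b} := if_neg h

theorem mk_snd_subset (b : Bool) (s : Pvee P) : (mk 𝒜 b s).1.2 ⊆ {b} := by
  by_cases h : s ∈ 𝒜
  · rw [mk_snd_of_mem h]; exact Set.empty_subset _
  · rw [mk_snd_of_notMem h]

theorem exists_snd_subset (p : Doubling 𝒜) : ∃ b, p.1.2 ⊆ {b} := by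
  by_cases h : p.1.1 ∈ 𝒜
  · exact ⟨true, by rw [p.2.1 h]; exact Set.empty_subset _⟩
  · obtain ⟨b, hb⟩ := p.2.2 h
    exact ⟨b, hb.le⟩

theorem le_mk (h𝒜 : IsFScottClosed 𝒜) {p : Doubling 𝒜} {b : Bool} {s : Pvee P}
    (hs : p.1.1 ≤ s) (hb : p.1.2 ⊆ {b}) : p ≤ mk 𝒜 b s := by
  refine ⟨hs, ?_⟩
  by_cases h : s ∈ 𝒜
  · rw [p.2.1 (h𝒜.1.1 hs h)]
    exact Set.empty_subset _
  · rw [mk_snd_of_notMem h]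
    exact hb

/-- Suprema of sets contained in a single copy are computed in `P^∨`, provided that a set inside
`𝒜` has its supremum in `𝒜`. -/
theorem isLUB_mk (h𝒜 : IsFScottClosed 𝒜) {S : Set (Doubling 𝒜)} {b : Bool} {s : Pvee P}
    (hb : ∀ p ∈ S, p.1.2 ⊆ {b}) (hs : IsLUB ((fun p => p.1.1) '' S) s)
    (hmem : (∀ p ∈ S, p.1.1 ∈ 𝒜) → s ∈ 𝒜) : IsLUB S (mk 𝒜 b s) := by
  constructor
  · intro p hp
    exact le_mk h𝒜 (hs.1 ⟨p, hp, rfl⟩) (hb p hp)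
  · intro q hq
    refine ⟨hs.2 ?_, ?_⟩
    · rintro _ ⟨p, hp, rfl⟩
      exact (hq hp).1
    · by_cases h : s ∈ 𝒜
      · rw [mk_snd_of_mem h]
        exact Set.empty_subset _
      · rw [mk_snd_of_notMem h]
        -- Some `p ∈ S` lies off `𝒜`; its label is `{b}`, and `q` lies above `p`.
        obtain ⟨p, hp, hpA⟩ : ∃ p ∈ S, p.1.1 ∉ 𝒜 := by
          by_contra! hc
          exact h (hmem hc)
        obtain ⟨c, hc⟩ := p.2.2 hpA
        have hcb : c = b := by
          have := hb p hp
          rw [hc] at this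
          exact Set.singleton_subset_singleton.1 this
        rw [← hcb, ← hc]
        exact (hq hp).2

theorem directedOn_fst {d : Set (Doubling 𝒜)} (hdir : DirectedOn (· ≤ ·) d) :
    DirectedOn (· ≤ ·) ((fun p : Doubling 𝒜 => p.1.1) '' d) := by
  rintro _ ⟨x, hx, rfl⟩ _ ⟨y, hy, rfl⟩
  obtain ⟨z, hz, hxz, hyz⟩ := hdir x hx y hy
  exact ⟨_, ⟨z, hz, rfl⟩, hxz.1, hyz.1⟩

theorem isDcpoVSemilattice (h𝒜 : IsFScottClosed 𝒜) : IsDcpoVSemilattice (Doubling 𝒜) := by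
  constructor
  · intro d hne hdir
    obtain ⟨s, hs, -⟩ := Pvee.exists_isLUB_directed _ (hne.image _) (directedOn_fst hdir)
    obtain ⟨b, hb⟩ : ∃ b, ∀ p ∈ d, p.1.2 ⊆ {b} := by
      by_cases h : ∀ p ∈ d, p.1.1 ∈ 𝒜
      · exact ⟨true, fun p hp => by rw [p.2.1 (h p hp)]; exact Set.empty_subset _⟩
      · push Not at h
        obtain ⟨p, hp, hpA⟩ := h
        obtain ⟨b, hb⟩ := p.2.2 hpA
        refine ⟨b, fun q hq => ?_⟩
        obtain ⟨r, -, hpr, hqr⟩ := hdir p hp q hq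
        obtain ⟨c, hc⟩ := exists_snd_subset r
        have hbc : b = c := by
          have := hpr.2.trans hc
          rw [hb] at this
          exact Set.singleton_subset_singleton.1 this
        rw [hbc]
        exact hqr.2.trans hc
    refine ⟨_, isLUB_mk h𝒜 hb hs fun h => ?_⟩
    exact h𝒜.1.2 _ (Set.image_subset_iff.2 h) (hne.image _) (directedOn_fst hdir) _ hs
  · rintro x y ⟨u, hu⟩
    have hfin : ((fun p : Doubling 𝒜 => p.1.1) '' {x, y}).Finite := (Set.toFinite _).image _
    have hne : ((fun p : Doubling 𝒜 => p.1.1) '' {x, y}).Nonempty :=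
      (Set.insert_nonempty _ _).image _
    have hbd : BddAbove ((fun p : Doubling 𝒜 => p.1.1) '' {x, y}) := by
      refine ⟨u.1.1, ?_⟩
      rintro _ ⟨p, hp, rfl⟩
      exact (hu hp).1
    obtain ⟨s, hs, -⟩ := Pvee.exists_isLUB_finite _ hne hfin hbd
    obtain ⟨b, hb⟩ := exists_snd_subset u
    refine ⟨_, isLUB_mk h𝒜 (fun p hp => (hu hp).2.trans hb) hs fun h => ?_⟩
    exact h𝒜.2 _ (Set.image_subset_iff.2 h) hne hfin hbd _ hs

theorem isScottContinuous_mk_jmap (h𝒜 : IsFScottClosed 𝒜) (b : Bool) :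
    IsScottContinuous fun x : P => mk 𝒜 b (jmap x) := by
  intro d hne hdir a ha
  refine isLUB_mk h𝒜 ?_ ?_ fun h => ?_
  · rintro _ ⟨x, -, rfl⟩
    exact mk_snd_subset _ _
  · rw [Set.image_image]
    exact isScottContinuous_jmap d hne hdir a ha
  · exact (isScottClosed_jmap_preimage h𝒜).2 d (fun x hx => h _ ⟨x, hx, rfl⟩) hne hdir a ha

end Doubling

/-! ### F-Scott closed families are determined by principal ideals -/

/-- An F-Scott closed family `𝒜` contains every `B ∈ P^∨` all of whose principal ideals it
contains. -/
theorem mem_of_jmap_mem {P : Type u} [PartialOrder P] {𝒜 : Set (Pvee P)}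
    (h𝒜 : IsFScottClosed 𝒜) (B : Pvee P) (hB : ∀ x ∈ B.1, jmap x ∈ 𝒜) : B ∈ 𝒜 := by
  by_contra hBA
  obtain ⟨m, hm⟩ := B.2.2 (Doubling 𝒜) (Doubling.isDcpoVSemilattice h𝒜) _
    (Doubling.isScottContinuous_mk_jmap h𝒜 true)
  have hle : ∀ b, m ≤ Doubling.mk 𝒜 b B := by
    intro b
    refine hm.2 ?_
    rintro _ ⟨x, hx, rfl⟩
    refine Doubling.le_mk h𝒜 (jmap_le_iff.2 hx) ?_
    rw [Doubling.mk_snd_of_mem (hB x hx)]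
    exact Set.empty_subset _
  have hmA : m.1.1 ∈ 𝒜 := by
    by_contra h
    obtain ⟨c, hc⟩ := m.2.2 h
    have hcb : ∀ b, c = b := by
      intro b
      have := (hle b).2.trans (Doubling.mk_snd_subset b B)
      rw [hc] at this
      exact Set.singleton_subset_singleton.1 this
    exact Bool.noConfusion ((hcb true).symm.trans (hcb false))
  refine hBA (h𝒜.1.1 (fun x hx => ?_) hmA)
  exact jmap_le_iff.1 (hm.1 ⟨x, hx, rfl⟩).1

/-- The lattice `Γ₀(P)` of all Scott closed subsets of a dcpo `P` (including `∅`)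
is order isomorphic to the family of all F-Scott closed subsets of `P^∨`, via
`η(A) = cl_F (j '' A)`. -/
theorem gamma0_orderIso_fScottClosure {P : Type u} [PartialOrder P] (hP : IsDcpo P) :
    ∃ η : {A : Set P // IsScottClosed A} ≃o {𝒜 : Set (Pvee P) // IsFScottClosed 𝒜},
      ∀ A : {A : Set P // IsScottClosed A}, (η A).1 = fScottClosure (jmap '' A.1) := by
  refine ⟨{ toFun := fun A => ⟨{B | B.1 ⊆ A.1}, isFScottClosed_setOf_subset A.2⟩
            invFun := fun 𝒜 => ⟨jmap ⁻¹' 𝒜.1, isScottClosed_jmap_preimage 𝒜.2⟩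
            left_inv := ?_
            right_inv := ?_
            map_rel_iff' := ?_ }, ?_⟩
  · intro A
    apply Subtype.ext
    ext x
    exact ⟨fun h => h (le_refl x), fun h y hy => A.2.1 hy h⟩
  · intro 𝒜
    apply Subtype.ext
    ext B
    exact ⟨fun h => mem_of_jmap_mem 𝒜.2 B h, fun h x hx => 𝒜.2.1.1 (jmap_le_iff.2 hx) h⟩
  · intro A A'
    constructor
    · intro h x hx
      have h₁ : jmap x ∈ {B : Pvee P | B.1 ⊆ A.1} := fun y hy => A.2.1 hy hx
      exact h h₁ (le_refl x)
    · intro h B hB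
      exact Set.Subset.trans hB h
  · intro A
    apply Set.Subset.antisymm
    · rintro B hB 𝒞 ⟨h𝒞, hA⟩
      exact mem_of_jmap_mem h𝒞 B fun x hx => hA ⟨x, hB hx, rfl⟩
    · intro B hB
      refine hB _ ⟨isFScottClosed_setOf_subset A.2, ?_⟩
      rintro _ ⟨x, hx, rfl⟩ y hy
      exact A.2.1 hy hx
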